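/- In the Coxeter group Y_332, the normal closure of the singleton {S} equals the normal closure of {phi(S)}, where S = (a b_1 c_1 a b_2 c_2 a b_3 c_3)^10 and phi is the diagram automorphism exchanging the indices 1 and 2. -/

import Mathlib

/-- Coxeter matrix of the diagram Y_332, with generators indexed by Fin 9:
0 = a, 1 = b_1, 2 = b_2, 3 = b_3, 4 = c_1, 5 = c_2, 6 = c_3, 7 = d_1, 8 = d_2.
Adjacent pairs (bond 3) are {a,b_i} (i=1,2,3), {b_i,c_i} (i=1,2,3), {c_1,d_1}, {c_2,d_2}. -/
def coxY : Fin 9 → Fin 9 → ℕ := fun i j =>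
  if i = j then 1
  else if ((i : ℕ), (j : ℕ)) ∈ [(0,1),(0,2),(0,3),(1,4),(2,5),(3,6),(4,7),(5,8)] ∨
          ((j : ℕ), (i : ℕ)) ∈ [(0,1),(0,2),(0,3),(1,4),(2,5),(3,6),(4,7),(5,8)] then 3
  else 2

def relsY : Set (FreeGroup (Fin 9)) :=
  Set.range fun p : Fin 9 × Fin 9 => (FreeGroup.of p.1 * FreeGroup.of p.2) ^ coxY p.1 p.2

/-- The Coxeter group with diagram Y_332. -/
abbrev Y : Type := PresentedGroup relsY

def y (i : Fin 9) : Y := PresentedGroup.of i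

/-- S = (a b_1 c_1 a b_2 c_2 a b_3 c_3)^10. -/
def S : Y := (y 0 * y 1 * y 4 * y 0 * y 2 * y 5 * y 0 * y 3 * y 6) ^ 10

/-- phi(S), where phi is the diagram automorphism of Y_332 exchanging
b_1 ↔ b_2, c_1 ↔ c_2, d_1 ↔ d_2 and fixing a, b_3, c_3; on the word defining S it
gives (a b_2 c_2 a b_1 c_1 a b_3 c_3)^10. -/
def Sphi : Y := (y 0 * y 2 * y 5 * y 0 * y 1 * y 4 * y 0 * y 3 * y 6) ^ 10

/-!
Let `w = a b₁c₁ a b₂c₂ a b₃c₃` and `w' = a b₂c₂ a b₁c₁ a b₃c₃`. Then `w⁻¹` is conjugate to `w'`, so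
`w ^ 10` and `w' ^ 10` have the same normal closure. Indeed `w⁻¹` is the reversal `c₃ b₃ u`, with
`u = a c₂b₂ a c₁b₁ a`, and `w' = v b₃ c₃` with `v = a b₂c₂ a b₁c₁ a`. As `c₃` commutes with `u`, the
elements `c₃ b₃ u` and `u b₃ c₃` are conjugate. Collecting `c₂` and `c₁` on the left of `u` and on
the right of `v` leaves the same word, so `u (c₂c₁) = (c₂c₁) v`; since `c₂c₁` commutes with
`b₃ c₃`, it conjugates `v b₃ c₃` to `u b₃ c₃`.
-/

section Group

variable {G : Type*} [Group G]

lemma isConj_mul_swap (x y : G) : IsConj (x * y) (y * x) :=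
  isConj_iff.mpr ⟨y, by group⟩

lemma isConj_mul_mul_reverse_of_commute {u z : G} (h : Commute z u) (x : G) :
    IsConj (z * x * u) (u * (x * z)) := by
  have move_z : IsConj (z * (x * u)) (x * u * z) := isConj_mul_swap _ _
  have move_u : IsConj (x * z * u) (u * (x * z)) := isConj_mul_swap _ _
  rw [← mul_assoc, ← h.right_comm] at move_z
  exact move_z.trans move_u

lemma isConj_mul_right_of_semiconjBy_of_commute {d u v x : G} (huv : SemiconjBy d v u)
    (hx : Commute d x) : IsConj (v * x) (u * x) :=
  isConj_iff.mpr ⟨d, mul_inv_eq_iff_eq_mul.mpr (huv.mul_right hx).eq⟩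

lemma normalClosure_singleton_eq_of_isConj {x y : G} (h : IsConj x y) :
    Subgroup.normalClosure {x} = Subgroup.normalClosure {y} := by
  simp only [Subgroup.normalClosure, Group.conjugatesOfSet, Set.mem_singleton_iff,
    Set.iUnion_iUnion_eq_left, h.conjugatesOf_eq]

lemma normalClosure_singleton_inv (x : G) :
    Subgroup.normalClosure {x⁻¹} = Subgroup.normalClosure {x} := by
  rw [← Subgroup.normalClosure_closure_eq_normalClosure, ← Set.inv_singleton,
    Subgroup.closure_inv, Subgroup.normalClosure_closure_eq_normalClosure]

lemma commute_of_mul_self_eq_one {x y : G} (hx : x * x = 1) (hy : y * y = 1)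
    (hxy : (x * y) ^ 2 = 1) : Commute x y := by
  have mul_eq_inv : x * y = (x * y)⁻¹ := eq_inv_of_mul_eq_one_left (by rwa [← pow_two])
  rwa [mul_inv_rev, inv_eq_of_mul_eq_one_left hx, inv_eq_of_mul_eq_one_left hy] at mul_eq_inv

/-- The product of the words `a bₗ cₗ` along the legs `l = i, j, k`, in this order. The elements `S`
and `phi(S)` are the tenth powers of such words for two different orders of the legs. -/
def legWord {ι : Type*} (a : G) (b c : ι → G) (i j k : ι) : G :=
  a * b i * c i * a * b j * c j * a * b k * c k

section Legs

variable {ι : Type*} {a : G} {b c : ι → G} {i j k : ι}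

lemma semiconjBy_swap_legs (hac : ∀ i, Commute a (c i))
    (hbc : Pairwise fun i j ↦ Commute (b i) (c j)) (hij : i ≠ j) :
    SemiconjBy (c j * c i) (a * b j * c j * a * b i * c i * a)
      (a * c j * b j * a * c i * b i * a) := by
  have collect_right :
      a * b j * c j * a * b i * c i * a = a * b j * a * b i * a * (c j * c i) := by
    have hcj : Commute (c j) (a * b i * a) :=
      (((hac j).mul_left (hbc hij)).mul_left (hac j)).symm
    calc
      _ = a * b j * (c j * (a * b i * (c i * a))) := by group
      _ = a * b j * (c j * (a * b i * a)) * c i := by rw [← (hac i).eq]; group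
      _ = _ := by rw [hcj.eq]; group
  have collect_left :
      a * c j * b j * a * c i * b i * a = c j * c i * (a * b j * a * b i * a) := by
    have hci : Commute (a * b j * a) (c i) :=
      ((hac i).mul_left (hbc hij.symm)).mul_left (hac i)
    calc
      _ = c j * (a * b j * a * c i) * b i * a := by rw [(hac j).eq]; group
      _ = _ := by rw [hci.eq]; group
  rw [SemiconjBy, collect_right, collect_left, mul_assoc (c j * c i)]

lemma isConj_reverse_legWord_swap (hac : ∀ i, Commute a (c i))
    (hbc : Pairwise fun i j ↦ Commute (b i) (c j)) (hcc : Pairwise fun i j ↦ Commute (c i) (c j))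
    (hij : i ≠ j) (hik : i ≠ k) (hjk : j ≠ k) :
    IsConj (c k * b k * (a * c j * b j * a * c i * b i * a)) (legWord a b c j i k) := by
  have commute_middle : Commute (c k) (a * c j * b j * a * c i * b i * a) :=
    (((((((hac k).mul_left (hcc hjk)).mul_left (hbc hjk)).mul_left (hac k)).mul_left
      (hcc hik)).mul_left (hbc hik)).mul_left (hac k)).symm
  have commute_leg : Commute (c j * c i) (b k * c k) :=
    ((hbc hjk.symm).symm.mul_right (hcc hjk)).mul_left ((hbc hik.symm).symm.mul_right (hcc hik))
  have reversed_legs : IsConj (c k * b k * (a * c j * b j * a * c i * b i * a))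
      (a * c j * b j * a * c i * b i * a * (b k * c k)) :=
    isConj_mul_mul_reverse_of_commute commute_middle (b k)
  have swapped_legs : IsConj (a * b j * c j * a * b i * c i * a * (b k * c k))
      (a * c j * b j * a * c i * b i * a * (b k * c k)) :=
    isConj_mul_right_of_semiconjBy_of_commute (semiconjBy_swap_legs hac hbc hij) commute_leg
  simpa only [legWord, mul_assoc] using reversed_legs.trans swapped_legs.symm

lemma isConj_inv_legWord_swap (ha : a * a = 1) (hb : ∀ i, b i * b i = 1)
    (hc : ∀ i, c i * c i = 1) (hac : ∀ i, Commute a (c i))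
    (hbc : Pairwise fun i j ↦ Commute (b i) (c j)) (hcc : Pairwise fun i j ↦ Commute (c i) (c j))
    (hij : i ≠ j) (hik : i ≠ k) (hjk : j ≠ k) :
    IsConj (legWord a b c i j k)⁻¹ (legWord a b c j i k) := by
  have inv_eq_reverse : (legWord a b c i j k)⁻¹ =
      c k * b k * (a * c j * b j * a * c i * b i * a) := by
    have a_inv : a⁻¹ = a := inv_eq_of_mul_eq_one_left ha
    have b_inv (l : ι) : (b l)⁻¹ = b l := inv_eq_of_mul_eq_one_left (hb l)
    have c_inv (l : ι) : (c l)⁻¹ = c l := inv_eq_of_mul_eq_one_left (hc l)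
    simp only [legWord, mul_inv_rev, a_inv, b_inv, c_inv, mul_assoc]
  rw [inv_eq_reverse]
  exact isConj_reverse_legWord_swap hac hbc hcc hij hik hjk

theorem stmt_13_general (ha : a * a = 1) (hb : ∀ i, b i * b i = 1)
    (hc : ∀ i, c i * c i = 1) (hac : ∀ i, Commute a (c i))
    (hbc : Pairwise fun i j ↦ Commute (b i) (c j)) (hcc : Pairwise fun i j ↦ Commute (c i) (c j))
    (hij : i ≠ j) (hik : i ≠ k) (hjk : j ≠ k) (n : ℕ) :
    Subgroup.normalClosure {legWord a b c i j k ^ n} =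
      Subgroup.normalClosure {legWord a b c j i k ^ n} := by
  rw [← normalClosure_singleton_inv, ← inv_pow]
  exact normalClosure_singleton_eq_of_isConj
    ((isConj_inv_legWord_swap ha hb hc hac hbc hcc hij hik hjk).pow n)

end Legs

end Group

lemma y_mul_y_pow_coxY (i j : Fin 9) : (y i * y j) ^ coxY i j = 1 :=
  PresentedGroup.one_of_mem ⟨(i, j), rfl⟩

lemma y_mul_self (i : Fin 9) : y i * y i = 1 := by
  simpa only [coxY, if_pos, pow_one] using y_mul_y_pow_coxY i i

lemma commute_y_of_coxY_eq_two {i j : Fin 9} (h : coxY i j = 2) : Commute (y i) (y j) :=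
  commute_of_mul_self_eq_one (y_mul_self i) (y_mul_self j) (h ▸ y_mul_y_pow_coxY i j)

lemma commute_y_a_c (i : Fin 3) : Commute (y 0) (y (![4, 5, 6] i)) :=
  commute_y_of_coxY_eq_two (by revert i; decide)

lemma pairwise_commute_y_b_c :
    Pairwise fun i j : Fin 3 ↦ Commute (y (![1, 2, 3] i)) (y (![4, 5, 6] j)) :=
  fun i j hij ↦ commute_y_of_coxY_eq_two (by revert i j; decide)

lemma pairwise_commute_y_c_c :
    Pairwise fun i j : Fin 3 ↦ Commute (y (![4, 5, 6] i)) (y (![4, 5, 6] j)) :=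
  fun i j hij ↦ commute_y_of_coxY_eq_two (by revert i j; decide)

/-- The normal closure of {S} equals the normal closure of {phi(S)}. -/
theorem stmt_13 :
    Subgroup.normalClosure ({S} : Set Y) = Subgroup.normalClosure ({Sphi} : Set Y) :=
  stmt_13_general (i := 0) (j := 1) (k := 2) (y_mul_self 0) (fun _ ↦ y_mul_self _)
    (fun _ ↦ y_mul_self _) commute_y_a_c pairwise_commute_y_b_c pairwise_commute_y_c_c
    (by decide) (by decide) (by decide) 10
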